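/- Let λ be any partition. Then, as integers, |λ| · Σ_{μ ⋖ λ} F_μ · c(μ) = (|λ| − 2) · F_λ · c(λ), where the sum runs over all partitions μ obtained from λ by removing a single box of its Young diagram, F denotes the number of standard Young tableaux of the given shape, and c(·) is the content sum. -/

import Mathlib

/-- A partition: a weakly decreasing list of positive integers. -/
def IsPartition (l : List ℕ) : Prop :=
  l.Pairwise (· ≥ ·) ∧ ∀ x ∈ l, 0 < x

/-- The `i`-th part of a partition list (0 beyond the length). -/
def partAt (l : List ℕ) (i : ℕ) : ℕ := l.getD i 0

/-- Containment of Young diagrams: `a ⊆ b` iff every part of `a` is at most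
the corresponding part of `b`. -/
def SubP (a b : List ℕ) : Prop := ∀ i, partAt a i ≤ partAt b i

/-- `a ⋖ b` in Young's lattice: `a ⊆ b` and `|b| = |a| + 1`. -/
def Covers (a b : List ℕ) : Prop := SubP a b ∧ a.sum + 1 = b.sum

/-- `numPaths a b` is the number of saturated chains from `a` to `b` in Young's
lattice, i.e. the skew standard-tableau count `F_{b/a}` (0 if `a ⊄ b`, and
`F_b` when `a = ∅`). -/
noncomputable def numPaths (a b : List ℕ) : ℕ :=
  Nat.card {c : Fin (b.sum - a.sum + 1) → List ℕ //
    c 0 = a ∧ c (Fin.last _) = b ∧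
    ∀ i : Fin (b.sum - a.sum),
      IsPartition (c i.castSucc) ∧ IsPartition (c i.succ) ∧
        Covers (c i.castSucc) (c i.succ)}

/-- The content sum `c(λ) = Σ_{(i,j)∈λ} (j − i)`. -/
def contentSum (l : List ℕ) : ℤ :=
  ∑ i : Fin l.length, ∑ j ∈ Finset.Icc 1 (l.get i), ((j : ℤ) - ((i : ℕ) + 1))


section algebra
variable {R : Type*} [Ring R]

theorem aux_P_sorted (u : ℤ → R) (h2 : ∀ k, u k * u k = 0)
    (h3 : ∀ j k, u j * u k * u j = 0)
    (hc : ∀ j k, j + 2 ≤ k → u j * u k = u k * u j) (x y z : ℤ) (hxy : x ≤ y) (hyz : y ≤ z) :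
    (x - 2 * y + z) • (u x * u y * u z) + (x - 2 * z + y) • (u x * u z * u y)
    + (y - 2 * x + z) • (u y * u x * u z) + (y - 2 * z + x) • (u y * u z * u x)
    + (z - 2 * x + y) • (u z * u x * u y) + (z - 2 * y + x) • (u z * u y * u x) = 0 := by
  rcases hxy.eq_or_lt with rfl | hxy
  · have : u z * u x * u x = 0 := by rw [mul_assoc, h2, mul_zero]
    simp [h2, h3, this]
  rcases hyz.eq_or_lt with rfl | hyz
  · have : u x * u y * u y = 0 := by rw [mul_assoc, h2, mul_zero]
    simp [h2, h3, this]
  have hxz := hc x z (by omega)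
  have e1 : u y * u z * u x = u y * u x * u z := by rw [mul_assoc, ← hxz, mul_assoc]
  rw [e1, ← hxz]
  by_cases hd : x - 2 * y + z = 0
  · have hz : z = 2 * y - x := by omega
    rw [hz]
    module
  · have key : u x * u y * u z + u z * u y * u x = u y * u x * u z + u x * u z * u y := by
      by_cases h : x + 2 ≤ y
      · rw [hc x y h, mul_assoc (u z), ← hc x y h, ← mul_assoc, hxz]
      · have h' := hc y z (by omega)
        rw [mul_assoc (u x), h', ← mul_assoc, ← h', e1, add_comm]
    have : u x * u y * u z = u y * u x * u z + u x * u z * u y - u z * u y * u x :=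
      eq_sub_of_add_eq key
    rw [this]
    module

theorem aux_P (u : ℤ → R) (h2 : ∀ k, u k * u k = 0)
    (h3 : ∀ j k, u j * u k * u j = 0)
    (hc : ∀ j k, j + 2 ≤ k → u j * u k = u k * u j) (x y z : ℤ) :
    (x - 2 * y + z) • (u x * u y * u z) + (x - 2 * z + y) • (u x * u z * u y)
    + (y - 2 * x + z) • (u y * u x * u z) + (y - 2 * z + x) • (u y * u z * u x)
    + (z - 2 * x + y) • (u z * u x * u y) + (z - 2 * y + x) • (u z * u y * u x) = 0 := by
  have H := aux_P_sorted u h2 h3 hc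
  rcases le_total x y with a | a <;> rcases le_total y z with b | b <;>
    rcases le_total x z with c | c
  · rw [← H x y z a b]
  · rw [← H x y z a b]
  · rw [← H x z y c b]; abel
  · rw [← H z x y c a]; abel
  · rw [← H y x z a c]; abel
  · rw [← H y z x b c]; abel
  · rw [← H z y x b a]; abel
  · rw [← H z y x b a]; abel

theorem aux_T (u : ℤ → R) (h2 : ∀ k, u k * u k = 0)
    (h3 : ∀ j k, u j * u k * u j = 0)
    (hc : ∀ j k, j + 2 ≤ k → u j * u k = u k * u j) (s : Finset ℤ) :
    (6 : ℤ) • ((∑ k ∈ s, k • u k) * (∑ k ∈ s, u k) * (∑ k ∈ s, u k)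
      - (2 : ℤ) • ((∑ k ∈ s, u k) * (∑ k ∈ s, k • u k) * (∑ k ∈ s, u k))
      + (∑ k ∈ s, u k) * (∑ k ∈ s, u k) * (∑ k ∈ s, k • u k)) = 0 := by
  set f : ℤ → ℤ → ℤ → R := fun x y z => (x - 2 * y + z) • (u x * u y * u z) with hf
  have hT : (∑ k ∈ s, k • u k) * (∑ k ∈ s, u k) * (∑ k ∈ s, u k)
      - (2 : ℤ) • ((∑ k ∈ s, u k) * (∑ k ∈ s, k • u k) * (∑ k ∈ s, u k))
      + (∑ k ∈ s, u k) * (∑ k ∈ s, u k) * (∑ k ∈ s, k • u k)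
      = ∑ x ∈ s, ∑ y ∈ s, ∑ z ∈ s, f x y z := by
    have s3 : ∀ a b c : ℤ → R, (∑ k ∈ s, a k) * (∑ k ∈ s, b k) * (∑ k ∈ s, c k)
        = ∑ x ∈ s, ∑ y ∈ s, ∑ z ∈ s, a x * b y * c z := by
      intro a b c
      rw [Finset.sum_mul_sum, Finset.sum_mul]
      refine Finset.sum_congr rfl fun x _ => ?_
      rw [Finset.sum_mul]
      refine Finset.sum_congr rfl fun y _ => ?_
      rw [Finset.mul_sum]
    rw [s3, s3, s3]
    simp only [Finset.smul_sum, ← Finset.sum_sub_distrib, ← Finset.sum_add_distrib]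
    refine Finset.sum_congr rfl fun x _ => Finset.sum_congr rfl fun y _ =>
      Finset.sum_congr rfl fun z _ => ?_
    simp only [hf, smul_mul_assoc, mul_smul_comm]
    module
  have e0 : ∑ x ∈ s, ∑ y ∈ s, ∑ z ∈ s, (f x y z + f x z y + f y x z + f y z x + f z x y + f z y x)
      = 0 := by
    refine Finset.sum_eq_zero fun x _ => Finset.sum_eq_zero fun y _ => Finset.sum_eq_zero fun z _ => ?_
    exact aux_P u h2 h3 hc x y z
  rw [hT, ← e0]
  simp only [Finset.sum_add_distrib]
  have c1 : ∑ x ∈ s, ∑ y ∈ s, ∑ z ∈ s, f x z y = ∑ x ∈ s, ∑ y ∈ s, ∑ z ∈ s, f x y z :=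
    Finset.sum_congr rfl fun x _ => Finset.sum_comm
  have c2 : ∑ x ∈ s, ∑ y ∈ s, ∑ z ∈ s, f y x z = ∑ x ∈ s, ∑ y ∈ s, ∑ z ∈ s, f x y z :=
    Finset.sum_comm
  have c3 : ∑ x ∈ s, ∑ y ∈ s, ∑ z ∈ s, f z x y = ∑ x ∈ s, ∑ y ∈ s, ∑ z ∈ s, f x y z := by
    rw [← c2, Finset.sum_congr rfl fun x _ => Finset.sum_comm]
  have c4 : ∑ x ∈ s, ∑ y ∈ s, ∑ z ∈ s, f y z x = ∑ x ∈ s, ∑ y ∈ s, ∑ z ∈ s, f x y z := by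
    rw [← c1]
    exact Finset.sum_comm
  have c5 : ∑ x ∈ s, ∑ y ∈ s, ∑ z ∈ s, f z y x = ∑ x ∈ s, ∑ y ∈ s, ∑ z ∈ s, f x y z := by
    rw [← c4]
    exact Finset.sum_congr rfl fun x _ => Finset.sum_comm
  rw [c1, c2, c3, c4, c5]
  module
end algebra

section maya
open Classical in
/-- remove a box of content `k` -/
noncomputable def uop (k : ℤ) : Module.End ℤ (Set ℤ → ℤ) where
  toFun φ S := if k + 1 ∈ S ∧ k ∉ S then φ (insert k (S \ {k + 1})) else 0
  map_add' φ ψ := by ext S; by_cases h : k + 1 ∈ S ∧ k ∉ S <;> simp [h]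
  map_smul' c φ := by ext S; by_cases h : k + 1 ∈ S ∧ k ∉ S <;> simp [h]

open Classical in
theorem uop_apply (k : ℤ) (φ : Set ℤ → ℤ) (S : Set ℤ) :
    uop k φ S = if k + 1 ∈ S ∧ k ∉ S then φ (insert k (S \ {k + 1})) else 0 := rfl

theorem uop_sq (k : ℤ) : uop k * uop k = 0 := by
  ext φ S
  simp [uop_apply]

theorem uop_comm (j k : ℤ) (h : j + 2 ≤ k) : uop j * uop k = uop k * uop j := by
  ext φ S
  have h1 : k + 1 ≠ j := by omega
  have h2 : k ≠ j := by omega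
  have h3 : k ≠ j + 1 := by omega
  have e : insert k (insert j (S \ {j + 1}) \ {k + 1}) =
     insert j (insert k (S \ {k + 1}) \ {j + 1}) := by
    ext x; simp; grind
  simp [uop_apply, h1, h2, h3, h1.symm, h2.symm, h3.symm, e]
  grind

theorem uop_braid (j k : ℤ) : uop j * uop k * uop j = 0 := by
  rcases lt_trichotomy j k with h | rfl | h
  · by_cases h' : j + 2 ≤ k
    · rw [uop_comm j k h', mul_assoc, uop_sq, mul_zero]
    · obtain rfl : k = j + 1 := by omega
      ext φ S
      simp [uop_apply]
      intros; omega
  · rw [uop_sq, zero_mul]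
  · by_cases h' : k + 2 ≤ j
    · rw [← uop_comm k j h', mul_assoc, uop_sq, mul_zero]
    · obtain rfl : j = k + 1 := by omega
      ext φ S
      simp [uop_apply]
      intros; omega

noncomputable def opB (N : ℕ) : Module.End ℤ (Set ℤ → ℤ) :=
  ∑ k ∈ Finset.Icc (-(N : ℤ)) N, uop k
noncomputable def opA (N : ℕ) : Module.End ℤ (Set ℤ → ℤ) :=
  ∑ k ∈ Finset.Icc (-(N : ℤ)) N, k • uop k

open Classical in
noncomputable def vac : Set ℤ → ℤ := fun S => if S = Set.Iic 0 then 1 else 0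

theorem opA_vac (N : ℕ) : opA N vac = 0 := by
  ext S
  simp only [opA, LinearMap.sum_apply, Finset.sum_apply, LinearMap.smul_apply, Pi.smul_apply,
    Pi.zero_apply]
  refine Finset.sum_eq_zero fun k _ => ?_
  by_cases hk : k = 0
  · simp [hk]
  rw [uop_apply]
  split_ifs with h
  · have : insert k (S \ {k + 1}) ≠ Set.Iic 0 := by
      intro h
      have a : k ∈ Set.Iic (0 : ℤ) := by rw [← h]; simp
      have b : k + 1 ∉ Set.Iic (0 : ℤ) := by rw [← h]; simp
      simp at a b
      omega
    simp [vac, this]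
  · simp

theorem opAB (N : ℕ) (φ : Set ℤ → ℤ) :
    opA N (opB N (opB N φ)) - 2 • opB N (opA N (opB N φ)) + opB N (opB N (opA N φ)) = 0 := by
  have := aux_T uop uop_sq uop_braid uop_comm (Finset.Icc (-(N : ℤ)) N)
  have h := DFunLike.congr_fun this φ
  ext S
  have h' := congrFun h S
  change (6 : ℤ) * (opA N (opB N (opB N φ)) S - 2 * opB N (opA N (opB N φ)) S
    + opB N (opB N (opA N φ)) S) = 0 at h'
  simp only [Pi.add_apply, Pi.sub_apply, Pi.smul_apply, Pi.zero_apply, two_smul]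
  linarith

/-- F -/
noncomputable def fv (N n : ℕ) : Set ℤ → ℤ := (opB N)^[n] vac
noncomputable def hv (N : ℕ) : ℕ → Set ℤ → ℤ
  | 0 => 0
  | n + 1 => opB N (hv N n) + opA N (fv N n)

theorem fv_succ (N n : ℕ) : fv N (n+1) = opB N (fv N n) := by
  simp [fv, Function.iterate_succ_apply']

theorem opA_fv (N n : ℕ) : opA N (fv N (n+1)) = (n+1 : ℤ) • (opB N)^[n] (opA N (opB N vac)) := by
  induction n using Nat.twoStepInduction with
  | zero => simp [fv]
  | one =>
    have := opAB N vac
    rw [opA_vac, map_zero, map_zero, add_zero, sub_eq_zero] at this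
    simp [fv]
    rw [this, two_smul]; norm_num; rw [two_mul]
  | more n ih1 ih2 =>
    have := opAB N (fv N (n+1))
    rw [← fv_succ, ← fv_succ, ih1, ih2] at this
    simp only [map_smul, ← Function.iterate_succ_apply'] at this
    rw [← eq_neg_iff_add_eq_zero, sub_eq_iff_eq_add] at this
    rw [this]
    push_cast
    module

theorem hv_eq (N n : ℕ) : (2 : ℤ) • hv N (n+2) =
    ((n+2)*(n+1) : ℤ) • (opB N)^[n] (opA N (opB N vac)) := by
  induction n with
  | zero => 
    have := opA_fv N 0
    simp [hv, fv, opA_vac]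
  | succ n ih =>
    rw [hv, smul_add, ← map_smul, ih, opA_fv, map_smul, ← Function.iterate_succ_apply' (opB N)]
    push_cast
    module

theorem hv_final (N n : ℕ) : (n + 1 : ℤ) • opB N (hv N n) = ((n + 1 : ℤ) - 2) • hv N (n+1) := by
  match n with
  | 0 => simp [hv, fv, opA_vac]
  | 1 => simp [hv, fv, opA_vac]
  | n + 2 =>
    have h1 := hv_eq N n
    have h2 := hv_eq N (n+1)
    have h3 : (2 : ℤ) • opB N (hv N (n+2)) =
      ((n+2)*(n+1) : ℤ) • (opB N)^[n+1] (opA N (opB N vac)) := by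
      rw [← map_smul, h1, map_smul, ← Function.iterate_succ_apply' (opB N)]
    ext S
    have h2 := congrFun h2 S
    have h3 := congrFun h3 S
    simp only [Pi.smul_apply, smul_eq_mul] at *
    push_cast at *
    have : (2:ℤ) ≠ 0 := by norm_num
    apply mul_left_cancel₀ this
    linear_combination (n+3:ℤ) * h3 - (n+1:ℤ) * h2
end maya

section lists

theorem partAt_of_lt {l : List ℕ} {i : ℕ} (h : i < l.length) : partAt l i = l[i] := by
  simp [partAt, h]

theorem partAt_of_ge {l : List ℕ} {i : ℕ} (h : l.length ≤ i) : partAt l i = 0 := by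
  simp [partAt, h]

theorem partAt_pos {l : List ℕ} (hl : IsPartition l) {i : ℕ} : 0 < partAt l i ↔ i < l.length := by
  constructor
  · intro h
    by_contra h'
    rw [partAt_of_ge (by omega)] at h
    omega
  · intro h
    rw [partAt_of_lt h]
    exact hl.2 _ (List.getElem_mem h)

theorem partAt_anti {l : List ℕ} (hl : IsPartition l) : Antitone (partAt l) := by
  intro i j hij
  by_cases hj : j < l.length
  · rw [partAt_of_lt hj, partAt_of_lt (hij.trans_lt hj)]
    rcases hij.eq_or_lt with rfl | h
    · exact le_rfl
    · exact List.pairwise_iff_getElem.1 hl.1 i j _ _ h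
  · rw [partAt_of_ge (by omega)]; omega

theorem isPartition_of {l : List ℕ} (h1 : Antitone (partAt l))
    (h2 : ∀ i < l.length, 0 < partAt l i) : IsPartition l := by
  constructor
  · rw [List.pairwise_iff_getElem]
    intro i j hi hj hij
    have := h1 hij.le
    rwa [partAt_of_lt hi, partAt_of_lt hj] at this
  · intro x hx
    obtain ⟨i, hi, rfl⟩ := List.mem_iff_getElem.1 hx
    rw [← partAt_of_lt hi]
    exact h2 i hi

theorem part_ext {l m : List ℕ} (hl : IsPartition l) (hm : IsPartition m)
    (h : ∀ i, partAt l i = partAt m i) : l = m := by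
  have hlen : l.length = m.length := by
    have key : ∀ i, i < l.length ↔ i < m.length := fun i => by
      rw [← partAt_pos hl, ← partAt_pos hm, h]
    have := key l.length
    have := key m.length
    omega
  refine List.ext_getElem hlen fun i h1 h2 => ?_
  rw [← partAt_of_lt h1, ← partAt_of_lt h2, h]

theorem sum_eq_partAt (l : List ℕ) (L : ℕ) (hL : l.length ≤ L) :
    l.sum = ∑ i ∈ Finset.range L, partAt l i := by
  rw [← Finset.sum_subset (s₁ := Finset.range l.length)]
  · rw [Finset.sum_range, ← Fin.sum_univ_getElem]
    refine Finset.sum_congr rfl fun i _ => ?_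
    rw [partAt_of_lt i.2]
  · intro x; simp; omega
  · intro x _ hx
    exact partAt_of_ge (by simpa using hx)

theorem content_eq_partAt (l : List ℕ) (L : ℕ) (hL : l.length ≤ L) :
    contentSum l = ∑ i ∈ Finset.range L, ∑ j ∈ Finset.Icc 1 (partAt l i), ((j : ℤ) - (i + 1)) := by
  rw [← Finset.sum_subset (s₁ := Finset.range l.length)]
  · rw [Finset.sum_range, contentSum]
    refine Finset.sum_congr rfl fun i _ => ?_
    rw [partAt_of_lt i.2]
    rfl
  · intro x; simp; omega
  · intro x _ hx
    rw [partAt_of_ge (by simpa using hx)]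
    simp

/-- remove a box in row `i` -/
def remBox (l : List ℕ) (i : ℕ) : List ℕ :=
  if partAt l i = 1 then l.dropLast else l.set i (partAt l i - 1)

theorem partAt_remBox {l : List ℕ} (hl : IsPartition l) {i : ℕ}
    (hi : partAt l (i + 1) < partAt l i) (j : ℕ) :
    partAt (remBox l i) j = if j = i then partAt l i - 1 else partAt l j := by
  have hil : i < l.length := (partAt_pos hl).1 (by omega)
  unfold remBox
  split_ifs with h1 h2 h2
  · have : ¬ (i + 1 < l.length) := by rw [← partAt_pos hl]; omega
    rw [partAt_of_ge (by simp; omega)]; omega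
  · have : ¬ (i + 1 < l.length) := by rw [← partAt_pos hl]; omega
    by_cases hj : j < l.length
    · rw [partAt_of_lt hj, partAt_of_lt (by simp; omega)]; simp
    · rw [partAt_of_ge (by simp; omega), partAt_of_ge (by omega)]
  · subst h2
    rw [partAt_of_lt (by simpa using hil)]; simp
  · by_cases hj : j < l.length
    · rw [partAt_of_lt (by simpa using hj), partAt_of_lt hj, List.getElem_set_ne (by omega)]
    · rw [partAt_of_ge (by simpa using hj), partAt_of_ge (by omega)]

theorem remBox_length_le (l : List ℕ) (i : ℕ) : (remBox l i).length ≤ l.length := by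
  unfold remBox; split_ifs <;> simp

theorem remBox_partition {l : List ℕ} (hl : IsPartition l) {i : ℕ}
    (hi : partAt l (i + 1) < partAt l i) : IsPartition (remBox l i) := by
  have hil : i < l.length := (partAt_pos hl).1 (by omega)
  apply isPartition_of
  · apply antitone_nat_of_succ_le
    intro j
    rw [partAt_remBox hl hi, partAt_remBox hl hi]
    have := partAt_anti hl (Nat.le_succ j)
    simp only [Nat.succ_eq_add_one] at this
    split_ifs with h1 h2 h2
    · omega
    · subst h1; omega
    · subst h2; omega
    · exact this
  · intro j hj
    have hj' := hj.trans_le (remBox_length_le l i)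
    rw [partAt_remBox hl hi]
    split_ifs with h
    · subst h
      by_contra h0
      have h1 : partAt l j = 1 := by omega
      have : ¬ (j + 1 < l.length) := by rw [← partAt_pos hl]; omega
      rw [remBox, if_pos h1] at hj
      simp at hj; omega
    · exact (partAt_pos hl).2 hj'

theorem remBox_covers {l : List ℕ} (hl : IsPartition l) {i : ℕ}
    (hi : partAt l (i + 1) < partAt l i) : Covers (remBox l i) l := by
  have hil : i < l.length := (partAt_pos hl).1 (by omega)
  constructor
  · intro j
    rw [partAt_remBox hl hi]; split_ifs with h
    · subst h; omega
    · exact le_rfl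
  · rw [sum_eq_partAt _ _ (remBox_length_le l i), sum_eq_partAt l _ le_rfl,
      ← Finset.add_sum_erase _ _ (Finset.mem_range.2 hil),
      ← Finset.add_sum_erase _ (partAt l) (Finset.mem_range.2 hil)]
    have hc : ∀ j ∈ (Finset.range l.length).erase i, partAt (remBox l i) j = partAt l j := by
      intro j hj
      rw [partAt_remBox hl hi, if_neg (Finset.ne_of_mem_erase hj)]
    rw [Finset.sum_congr rfl hc, partAt_remBox hl hi, if_pos rfl, add_right_comm,
      Nat.sub_add_cancel (by omega)]

theorem content_remBox {l : List ℕ} (hl : IsPartition l) {i : ℕ}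
    (hi : partAt l (i + 1) < partAt l i) :
    contentSum l = contentSum (remBox l i) + ((partAt l i : ℤ) - i - 1) := by
  have hil : i < l.length := (partAt_pos hl).1 (by omega)
  rw [content_eq_partAt _ _ (remBox_length_le l i), content_eq_partAt l _ le_rfl,
      ← Finset.add_sum_erase _ _ (Finset.mem_range.2 hil),
      ← Finset.add_sum_erase _ (fun i => ∑ j ∈ Finset.Icc 1 (partAt (remBox _ _) i), _)
        (Finset.mem_range.2 hil)]
  have : ∀ j ∈ (Finset.range l.length).erase i,
      (∑ t ∈ Finset.Icc 1 (partAt (remBox l i) j), ((t : ℤ) - (j + 1))) =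
      ∑ t ∈ Finset.Icc 1 (partAt l j), ((t : ℤ) - (j + 1)) := by
    intro j hj
    rw [partAt_remBox hl hi, if_neg (Finset.ne_of_mem_erase hj)]
  rw [Finset.sum_congr rfl this, partAt_remBox hl hi, if_pos rfl]
  obtain ⟨p, hp⟩ : ∃ p, partAt l i = p + 1 := ⟨partAt l i - 1, by omega⟩
  rw [hp, Finset.sum_Icc_succ_top (by omega)]
  simp
  ring

theorem covers_exists {l m : List ℕ} (hl : IsPartition l) (hm : IsPartition m)
    (h : Covers m l) : ∃ i, partAt l (i + 1) < partAt l i ∧ remBox l i = m := by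
  obtain ⟨hs, hsum⟩ := h
  set L := max l.length m.length
  rw [sum_eq_partAt m L (le_max_right _ _), sum_eq_partAt l L (le_max_left _ _)] at hsum
  obtain ⟨i, hiL, hi⟩ : ∃ i ∈ Finset.range L, partAt m i < partAt l i := by
    by_contra! hcon
    have := Finset.sum_le_sum hcon
    omega
  rw [← Finset.add_sum_erase _ _ hiL, ← Finset.add_sum_erase _ (partAt l) hiL] at hsum
  have hle := Finset.sum_le_sum (s := (Finset.range L).erase i) fun j _ => hs j
  have h1 : partAt l i = partAt m i + 1 := by omega
  have h2 : ∑ j ∈ (Finset.range L).erase i, partAt m j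
     = ∑ j ∈ (Finset.range L).erase i, partAt l j := by omega
  rw [Finset.sum_eq_sum_iff_of_le fun j _ => hs j] at h2
  have h3 : ∀ j, j ≠ i → partAt m j = partAt l j := by
    intro j hj
    by_cases hjL : j < L
    · exact h2 j (by simp [hj, hjL])
    · rw [partAt_of_ge (by omega), partAt_of_ge (by omega)]
  have h4 : partAt l (i + 1) < partAt l i := by
    rw [← h3 _ (by omega), h1]
    have := partAt_anti hm (Nat.le_succ i)
    simp only [Nat.succ_eq_add_one] at this
    omega
  refine ⟨i, h4, part_ext (remBox_partition hl h4) hm fun j => ?_⟩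
  rw [partAt_remBox hl h4]
  split_ifs with hj
  · subst hj; omega
  · exact (h3 j hj).symm

/-- the removable rows -/
def corners (l : List ℕ) : Finset ℕ :=
  (Finset.range l.length).filter fun i => partAt l (i + 1) < partAt l i

theorem mem_corners {l : List ℕ} (hl : IsPartition l) {i : ℕ} :
    i ∈ corners l ↔ partAt l (i + 1) < partAt l i := by
  simp only [corners, Finset.mem_filter, Finset.mem_range, and_iff_right_iff_imp]
  intro h
  exact (partAt_pos hl).1 (by omega)

theorem remBox_injOn {l : List ℕ} (hl : IsPartition l) :
    Set.InjOn (remBox l) (corners l : Set ℕ) := by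
  intro i hi j hj hij
  have hi := (mem_corners hl).1 hi
  have hj := (mem_corners hl).1 hj
  by_contra hne
  have h := partAt_remBox hl hi i
  rw [hij, partAt_remBox hl hj, if_neg hne, if_pos rfl] at h
  omega

theorem coverSet_eq {l : List ℕ} (hl : IsPartition l) :
    {m : List ℕ | IsPartition m ∧ Covers m l} = ((corners l).image (remBox l) : Finset (List ℕ)) := by
  ext m
  simp only [Set.mem_ofPred_eq, Finset.coe_image, Set.mem_image, Finset.mem_coe, mem_corners hl]
  constructor
  · rintro ⟨h1, h2⟩; exact covers_exists hl h1 h2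
  · rintro ⟨i, hi, rfl⟩; exact ⟨remBox_partition hl hi, remBox_covers hl hi⟩

theorem finsum_covers {l : List ℕ} (hl : IsPartition l) (g : List ℕ → ℤ) :
    ∑ᶠ m ∈ {m : List ℕ | IsPartition m ∧ Covers m l}, g m = ∑ i ∈ corners l, g (remBox l i) := by
  rw [coverSet_eq hl, finsum_mem_coe_finset, Finset.sum_image (remBox_injOn hl)]

/-- chains -/
def Chains (n : ℕ) (b : List ℕ) : Type :=
  {c : Fin (n + 1) → List ℕ //
    c 0 = [] ∧ c (Fin.last _) = b ∧
    ∀ i : Fin n,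
      IsPartition (c i.castSucc) ∧ IsPartition (c i.succ) ∧
        Covers (c i.castSucc) (c i.succ)}

theorem numPaths_eq (b : List ℕ) : numPaths [] b = Nat.card (Chains b.sum b) := rfl

theorem sigma_chains_ext {n : ℕ} {b : List ℕ}
    (p q : Σ m : {m : List ℕ // IsPartition m ∧ Covers m b}, Chains n m.1)
    (h : p.2.1 = q.2.1) : p = q := by
  obtain ⟨⟨m, hm⟩, ⟨c, h0, h1, h2⟩⟩ := p
  obtain ⟨⟨m', hm'⟩, ⟨c', h0', h1', h2'⟩⟩ := q
  simp only at h h1 h1'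
  subst h
  subst h1
  subst h1'
  rfl

def chainsEquiv (n : ℕ) (b : List ℕ) (hb : IsPartition b) :
    Chains (n + 1) b ≃ Σ m : {m : List ℕ // IsPartition m ∧ Covers m b}, Chains n m.1 where
  toFun c := ⟨⟨c.1 (Fin.last n).castSucc, (c.2.2.2 (Fin.last n)).1, by
      have := (c.2.2.2 (Fin.last n)).2.2
      rwa [Fin.succ_last, c.2.2.1] at this⟩,
    ⟨fun i => c.1 i.castSucc, c.2.1, rfl, fun i => c.2.2.2 i.castSucc⟩⟩
  invFun p := ⟨Fin.snoc (α := fun _ => List ℕ) p.2.1 b, by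
      have := Fin.snoc_castSucc (α := fun _ => List ℕ) b p.2.1 0
      rw [Fin.castSucc_zero] at this
      rw [this, p.2.2.1], by simp, by
      intro i
      refine Fin.lastCases ?_ (fun i => ?_) i
      · rw [Fin.succ_last, Fin.snoc_last, Fin.snoc_castSucc, p.2.2.2.1]
        exact ⟨p.1.2.1, hb, p.1.2.2⟩
      · rw [Fin.snoc_castSucc, Fin.succ_castSucc, Fin.snoc_castSucc]
        exact p.2.2.2.2 i⟩
  left_inv c := by
    apply Subtype.ext
    funext i
    refine Fin.lastCases ?_ (fun i => ?_) i
    · simp [c.2.2.1]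
    · simp
  right_inv p := by
    apply sigma_chains_ext
    funext i
    simp only [Fin.snoc_castSucc]

theorem chains_finite (n : ℕ) : ∀ b, IsPartition b → Finite (Chains n b) := by
  induction n with
  | zero =>
    intro b _
    have : Subsingleton (Chains 0 b) := ⟨fun c d => Subtype.ext (funext fun i => by
      have : i = 0 := Subsingleton.elim (α := Fin 1) _ _
      rw [this, c.2.1, d.2.1])⟩
    infer_instance
  | succ n ih =>
    intro b hb
    have : Finite {m : List ℕ // IsPartition m ∧ Covers m b} := by
      have := Finset.finite_toSet ((corners b).image (remBox b))
      rw [← coverSet_eq hb] at this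
      exact this
    have : ∀ m : {m : List ℕ // IsPartition m ∧ Covers m b}, Finite (Chains n m.1) :=
      fun m => ih m.1 m.2.1
    exact Finite.of_equiv _ (chainsEquiv n b hb).symm

theorem numPaths_nil : numPaths [] [] = 1 := by
  rw [numPaths_eq, Nat.card_eq_one_iff_unique]
  constructor
  · exact ⟨fun c d => Subtype.ext (funext fun i => by
      have : i = 0 := Subsingleton.elim (α := Fin 1) _ _
      rw [this, c.2.1, d.2.1])⟩
  · exact ⟨⟨fun _ => [], rfl, rfl, fun i => Fin.elim0 i⟩⟩

theorem numPaths_rec {l : List ℕ} (hl : IsPartition l) {n : ℕ} (hn : l.sum = n + 1) :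
    (numPaths [] l : ℤ) = ∑ i ∈ corners l, (numPaths [] (remBox l i) : ℤ) := by
  rw [numPaths_eq, hn, Nat.card_congr (chainsEquiv n l hl)]
  have hfin : Finite {m : List ℕ // IsPartition m ∧ Covers m l} := by
      have := Finset.finite_toSet ((corners l).image (remBox l))
      rw [← coverSet_eq hl] at this
      exact this
  have := Fintype.ofFinite {m : List ℕ // IsPartition m ∧ Covers m l}
  have : ∀ m : {m : List ℕ // IsPartition m ∧ Covers m l}, Finite (Chains n m.1) :=
      fun m => chains_finite n m.1 m.2.1
  rw [Nat.card_sigma, ← finsum_covers hl (fun m => (numPaths [] m : ℤ)),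
    ← finsum_set_coe_eq_finsum_mem]
  refine Eq.trans ?_ (finsum_eq_sum_of_fintype
    (fun m : {m : List ℕ // IsPartition m ∧ Covers m l} => (numPaths [] m.1 : ℤ))).symm
  push_cast
  refine Finset.sum_congr rfl fun m _ => ?_
  have : m.1.sum = n := by have := m.2.2.2; omega
  rw [numPaths_eq, this]

/-- Maya diagram -/
def maya (l : List ℕ) : Set ℤ := Set.range fun j : ℕ => (partAt l j : ℤ) - j

theorem maya_nil : maya [] = Set.Iic 0 := by
  ext k
  simp only [maya, partAt, Set.mem_range, Set.mem_Iic, List.getD_nil]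
  constructor
  · rintro ⟨j, rfl⟩; omega
  · intro h; exact ⟨(-k).toNat, by omega⟩

theorem beta_strict {l : List ℕ} (hl : IsPartition l) {i j : ℕ} (h : i < j) :
    (partAt l j : ℤ) - j < (partAt l i : ℤ) - i := by
  have := partAt_anti hl h.le
  omega

theorem beta_inj {l : List ℕ} (hl : IsPartition l) {i j : ℕ}
    (h : (partAt l j : ℤ) - j = (partAt l i : ℤ) - i) : i = j := by
  rcases lt_trichotomy i j with h' | h' | h'
  · have := beta_strict hl h'; omega
  · exact h'
  · have := beta_strict hl h'; omega

theorem maya_remBox {l : List ℕ} (hl : IsPartition l) {i : ℕ}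
    (hi : partAt l (i + 1) < partAt l i) {k : ℤ} (hk : k = (partAt l i : ℤ) - i - 1) :
    maya (remBox l i) = insert k (maya l \ {k + 1}) := by
  ext x
  simp only [maya, Set.mem_range, Set.mem_insert_iff, Set.mem_sdiff, Set.mem_singleton_iff]
  constructor
  · rintro ⟨j, rfl⟩
    rw [partAt_remBox hl hi]
    split_ifs with h
    · left; subst h; omega
    · right
      refine ⟨⟨j, rfl⟩, fun h' => h (beta_inj hl (i := j) (j := i) (by omega))⟩
  · rintro (rfl | ⟨⟨j, rfl⟩, h⟩)
    · refine ⟨i, ?_⟩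
      rw [partAt_remBox hl hi, if_pos rfl]; omega
    · refine ⟨j, ?_⟩
      rw [partAt_remBox hl hi, if_neg]
      rintro rfl
      apply h; omega

theorem maya_cond {l : List ℕ} (hl : IsPartition l) (k : ℤ) :
    (k + 1 ∈ maya l ∧ k ∉ maya l) ↔ ∃ i ∈ corners l, (partAt l i : ℤ) - i - 1 = k := by
  simp only [mem_corners hl, maya, Set.mem_range]
  constructor
  · rintro ⟨⟨i, hi⟩, h⟩
    refine ⟨i, ?_, by omega⟩
    have h1 := partAt_anti hl (Nat.le_succ i)
    simp only [Nat.succ_eq_add_one] at h1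
    refine lt_of_le_of_ne h1 fun h2 => h ⟨i + 1, ?_⟩
    push_cast
    omega
  · rintro ⟨i, hi, rfl⟩
    refine ⟨⟨i, by omega⟩, ?_⟩
    rintro ⟨j, hj⟩
    rcases lt_trichotomy i j with h | rfl | h
    · rcases (Nat.succ_le_of_lt h).eq_or_lt with h' | h'
      · subst h'; push_cast at hj; simp only [Nat.succ_eq_add_one] at hj; omega
      · have := beta_strict hl h'; push_cast at this
        simp only [Nat.succ_eq_add_one] at this; omega
    · omega
    · have := beta_strict hl h; omega

theorem beta_bound {l : List ℕ} (hl : IsPartition l) {i N : ℕ} (hi : i ∈ corners l)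
    (hN : l.sum ≤ N) : (partAt l i : ℤ) - i - 1 ∈ Finset.Icc (-(N : ℤ)) N := by
  rw [mem_corners hl] at hi
  have hil : i < l.length := (partAt_pos hl).1 (by omega)
  have h1 : partAt l i ≤ l.sum := by
    rw [sum_eq_partAt l _ le_rfl]
    exact Finset.single_le_sum (f := partAt l) (fun _ _ => Nat.zero_le _) (Finset.mem_range.2 hil)
  have h2 : l.length ≤ l.sum := by
    rw [sum_eq_partAt l _ le_rfl]
    have := Finset.card_nsmul_le_sum (Finset.range l.length) (partAt l) 1 (fun i hi =>
      (partAt_pos hl).2 (Finset.mem_range.1 hi))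
    simpa using this
  rw [Finset.mem_Icc]
  omega

theorem op_sum {l : List ℕ} (hl : IsPartition l) {N : ℕ} (hN : l.sum ≤ N) (w : ℤ → ℤ)
    (φ : Set ℤ → ℤ) :
    ∑ k ∈ Finset.Icc (-(N : ℤ)) N, w k * uop k φ (maya l)
      = ∑ i ∈ corners l, w ((partAt l i : ℤ) - i - 1) * φ (maya (remBox l i)) := by
  symm
  apply Finset.sum_of_injOn (fun i : ℕ => (partAt l i : ℤ) - i - 1)
  · intro i _ j _ h
    exact beta_inj hl (by simp only at h; omega)
  · intro i hi
    exact beta_bound hl hi hN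
  · intro k _ hk
    rw [uop_apply, if_neg, mul_zero]
    rw [maya_cond hl]
    exact hk
  · intro i hi
    rw [uop_apply, if_pos ((maya_cond hl _).2 ⟨i, hi, rfl⟩),
      ← maya_remBox hl ((mem_corners hl).1 hi) rfl]

theorem opB_maya {l : List ℕ} (hl : IsPartition l) {N : ℕ} (hN : l.sum ≤ N)
    (φ : Set ℤ → ℤ) : opB N φ (maya l) = ∑ i ∈ corners l, φ (maya (remBox l i)) := by
  have := op_sum hl hN (fun _ => 1) φ
  simp only [one_mul] at this
  rw [← this]
  simp [opB]

theorem opA_maya {l : List ℕ} (hl : IsPartition l) {N : ℕ} (hN : l.sum ≤ N)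
    (φ : Set ℤ → ℤ) : opA N φ (maya l) =
      ∑ i ∈ corners l, ((partAt l i : ℤ) - i - 1) * φ (maya (remBox l i)) := by
  rw [← op_sum hl hN (fun k => k) φ]
  simp [opA]

theorem main_ind (N n : ℕ) (hnN : n ≤ N) : ∀ l, IsPartition l → l.sum = n →
    (numPaths [] l : ℤ) = fv N n (maya l) ∧
    (numPaths [] l : ℤ) * contentSum l = hv N n (maya l) := by
  induction n with
  | zero =>
    intro l hl h
    have : l = [] := by
      rcases l with _ | ⟨a, t⟩
      · rfl
      · have := hl.2 a (by simp)
        simp at h; omega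
    subst this
    simp [numPaths_nil, fv, hv, vac, maya_nil, contentSum]
  | succ n ih =>
    intro l hl h
    have ih' : ∀ i ∈ corners l, _ := fun i hi =>
      ih (by omega) (remBox l i) (remBox_partition hl ((mem_corners hl).1 hi)) (by
        have := (remBox_covers hl ((mem_corners hl).1 hi)).2; omega)
    constructor
    · rw [numPaths_rec hl h, fv_succ, opB_maya hl (by omega)]
      exact Finset.sum_congr rfl fun i hi => (ih' i hi).1
    · rw [numPaths_rec hl h, hv, Pi.add_apply, opB_maya hl (by omega), opA_maya hl (by omega),
        ← Finset.sum_add_distrib, Finset.sum_mul]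
      refine Finset.sum_congr rfl fun i hi => ?_
      rw [← (ih' i hi).1, ← (ih' i hi).2, content_remBox hl ((mem_corners hl).1 hi)]
      ring
end lists

/-- `|λ| · Σ_{μ ⋖ λ} F_μ c(μ) = (|λ| − 2) · F_λ · c(λ)`, the sum running over all
partitions `μ` obtained from `λ` by removing one box of the Young diagram. -/
theorem size_mul_sum_F_contentSum (l : List ℕ) (hl : IsPartition l) :
    (l.sum : ℤ) *
        ∑ᶠ m ∈ {m : List ℕ | IsPartition m ∧ Covers m l},
          (numPaths [] m : ℤ) * contentSum m =
      ((l.sum : ℤ) - 2) * (numPaths [] l : ℤ) * contentSum l := by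
  rw [finsum_covers hl]
  rcases hn : l.sum with _ | n
  · have : l = [] := by
      rcases l with _ | ⟨a, t⟩
      · rfl
      · have := hl.2 a (by simp)
        simp at hn; omega
    subst this
    simp [contentSum]
  · have h1 : ∑ i ∈ corners l, (numPaths [] (remBox l i) : ℤ) * contentSum (remBox l i)
        = opB (n + 1) (hv (n + 1) n) (maya l) := by
      rw [opB_maya hl (by omega)]
      refine Finset.sum_congr rfl fun i hi => ?_
      refine (main_ind (n + 1) n (by omega) (remBox l i)
        (remBox_partition hl ((mem_corners hl).1 hi)) ?_).2
      have := (remBox_covers hl ((mem_corners hl).1 hi)).2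
      omega
    have h2 := (main_ind (n + 1) (n + 1) le_rfl l hl hn).2
    have h3 := congrFun (hv_final (n + 1) n) (maya l)
    simp only [Pi.smul_apply, smul_eq_mul] at h3
    rw [h1, mul_assoc, h2]
    push_cast
    exact h3
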